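/- arXiv:2407.01747 — 2 statements merged into one kernel-verified Lean document; each statement's English description precedes it below -/
import Mathlib

section
/- If a learning function l1 s-learns every X ∈ Γ1 and a learning function l2 s-learns every X ∈ Γ2, then there exists a learning function l3 that s-learns every X ∈ Γ1 ∪ Γ2. -/
/-!
Write `cnt l w` for the number of prefixes of `w` (including `w` itself) to which `l` says yes, and
`g w = max (cnt l₁ w) (cnt l₂ w) - 1` (truncated at `0`). Along any path `g` starts at `0` and grows
by at most one per bit, so the learning function `combine l₁ l₂`, which says yes exactly when `g`
increases, has count exactly `g` (`cnt_combine`).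

* If `combine l₁ l₂` says yes `n ≥ 1` times on a path, then `l₁` or `l₂` says yes at least `n + 1`
  times on it, so the measure condition holds by `2⁻⁽ⁿ⁺¹⁾ + 2⁻⁽ⁿ⁺¹⁾ = 2⁻ⁿ`
  (`measureCondition_combine`). Dropping one yes pays for the union bound.
* Since `g ≥ cnt lᵢ - 1`, the path averages at length `n` drop by at most `1 / n`, which does not
  affect the limit superior (`limsup_le_of_cnt_le`).

If `Γ₁` or `Γ₂` is empty, the function for the other class already works; this case is separate
because the measure condition is then unavailable for one of the functions.
-/

open Filter MeasureTheory

/-- `pref X n` is the string consisting of the first `n` bits of the sequence `X`. -/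
def pref (X : ℕ → Bool) (n : ℕ) : List Bool := (List.range n).map X

/-- The cylinder at a finite binary string `w`: all sequences extending `w`. -/
def cylinder (w : List Bool) : Set (ℕ → Bool) := {X | pref X w.length = w}

/-- `l` satisfies the measure condition (w.r.t. the measure `μ`):
for every `n`, the set of sequences along which `l` says yes (`true`)
at least `n` times has measure at most `2⁻ⁿ`. -/
def MeasureCondition (μ : Measure (ℕ → Bool)) (l : List Bool → Bool) : Prop :=
  ∀ n : ℕ, μ {Y | (n : ℕ∞) ≤ {m : ℕ | l (pref Y m) = true}.encard} ≤ (2 ^ n)⁻¹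

/-- The path average of a learning function `l` up to the string `w`. -/
noncomputable def pathAvg (l : List Bool → Bool) (w : List Bool) : ℝ :=
  (∑ i ∈ Finset.range (w.length + 1), if l (w.take i) then (1 : ℝ) else 0) / w.length

/-- `l` `s`-learns `X` (w.r.t. `μ`). -/
def SLearns (μ : Measure (ℕ → Bool)) (l : List Bool → Bool) (s : ℝ) (X : ℕ → Bool) : Prop :=
  MeasureCondition μ l ∧
    1 - s ≤ Filter.limsup (fun n => pathAvg l (pref X n)) Filter.atTop

theorem pref_length (X : ℕ → Bool) (n : ℕ) : (pref X n).length = n := by simp [pref]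

theorem pref_take (X : ℕ → Bool) {i n : ℕ} (h : i ≤ n) : (pref X n).take i = pref X i := by
  simp [pref, ← List.map_take, List.take_range, Nat.min_eq_left h]

theorem pref_dropLast (X : ℕ → Bool) (n : ℕ) : (pref X (n + 1)).dropLast = pref X n := by
  simp [pref, List.range_succ]

/-- The number of prefixes of `w`, including the empty one and `w` itself, to which `l` says
yes. -/
def cnt (l : List Bool → Bool) (w : List Bool) : ℕ :=
  ∑ i ∈ Finset.range (w.length + 1), if l (w.take i) then 1 else 0

theorem pathAvg_eq (l : List Bool → Bool) (X : ℕ → Bool) (n : ℕ) :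
    pathAvg l (pref X n) = (cnt l (pref X n) : ℝ) / n := by
  simp only [pathAvg, cnt, pref_length]
  push_cast
  rfl

theorem cnt_pref (l : List Bool → Bool) (X : ℕ → Bool) (n : ℕ) :
    cnt l (pref X n) = ∑ i ∈ Finset.range (n + 1), if l (pref X i) then 1 else 0 := by
  unfold cnt
  rw [pref_length]
  refine Finset.sum_congr rfl fun i hi => ?_
  rw [pref_take X (by simpa [Nat.lt_succ_iff] using hi)]

theorem cnt_pref_zero (l : List Bool → Bool) (X : ℕ → Bool) :
    cnt l (pref X 0) = if l (pref X 0) then 1 else 0 := by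
  rw [cnt_pref, zero_add, Finset.sum_range_one]

theorem cnt_pref_succ (l : List Bool → Bool) (X : ℕ → Bool) (n : ℕ) :
    cnt l (pref X (n + 1)) = cnt l (pref X n) + if l (pref X (n + 1)) then 1 else 0 := by
  rw [cnt_pref, cnt_pref, Finset.sum_range_succ]

theorem cnt_le (l : List Bool → Bool) (X : ℕ → Bool) (n : ℕ) : cnt l (pref X n) ≤ n + 1 := by
  induction n with
  | zero => rw [cnt_pref_zero]; split_ifs <;> simp
  | succ n ih => rw [cnt_pref_succ]; split_ifs <;> omega

/-- The number of yes answers along the whole path is the supremum of the counts on its prefixes. -/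
theorem le_encard_iff (l : List Bool → Bool) (X : ℕ → Bool) (n : ℕ) :
    (n : ℕ∞) ≤ {m : ℕ | l (pref X m) = true}.encard ↔ ∃ k, n ≤ cnt l (pref X k) := by
  have hc : ∀ k, cnt l (pref X k) =
      ((Finset.range (k + 1)).filter fun i => l (pref X i) = true).card := by
    intro k
    rw [cnt_pref, Finset.card_filter]
  constructor
  · intro h
    obtain ⟨t, hts, htn⟩ := Set.exists_subset_encard_eq h
    have hfin : t.Finite := Set.finite_of_encard_eq_coe htn
    obtain ⟨k, hk⟩ := hfin.bddAbove
    refine ⟨k, ?_⟩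
    rw [hc]
    rw [hfin.encard_eq_coe_toFinset_card] at htn
    have htn' : hfin.toFinset.card = n := by exact_mod_cast htn
    rw [← htn']
    refine Finset.card_le_card fun i hi => ?_
    have hi' : i ∈ t := by simpa using hi
    simp only [Finset.mem_filter, Finset.mem_range]
    exact ⟨Nat.lt_succ_of_le (hk hi'), hts hi'⟩
  · rintro ⟨k, hk⟩
    rw [hc] at hk
    calc (n : ℕ∞) ≤ (((Finset.range (k + 1)).filter fun i => l (pref X i) = true).card : ℕ∞) := by
          exact_mod_cast hk
      _ = (((Finset.range (k + 1)).filter fun i => l (pref X i) = true : Finset ℕ) :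
            Set ℕ).encard := (Set.encard_coe_eq_coe_finsetCard _).symm
      _ ≤ _ := by
          refine Set.encard_le_encard fun i hi => ?_
          simp only [Finset.coe_filter, Set.mem_ofPred_eq] at hi
          exact hi.2

/-- The count aimed at by `combine`: the larger of the two counts, less one (truncated at `0`). -/
def target (l₁ l₂ : List Bool → Bool) (w : List Bool) : ℕ := max (cnt l₁ w) (cnt l₂ w) - 1

/-- The learning function that says yes exactly when `target l₁ l₂` increases at the last bit. It
says no to the empty string, which equals its own `dropLast`. -/
def combine (l₁ l₂ : List Bool → Bool) (w : List Bool) : Bool :=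
  decide (target l₁ l₂ w.dropLast < target l₁ l₂ w)

theorem cnt_combine (l₁ l₂ : List Bool → Bool) (X : ℕ → Bool) (n : ℕ) :
    cnt (combine l₁ l₂) (pref X n) = target l₁ l₂ (pref X n) := by
  induction n with
  | zero =>
    have h₁ := cnt_le l₁ X 0
    have h₂ := cnt_le l₂ X 0
    have h : target l₁ l₂ (pref X 0) = 0 := by unfold target; omega
    rw [cnt_pref_zero, h]
    simp [combine, pref]
  | succ n ih =>
    rw [cnt_pref_succ, ih]
    have h₁ := cnt_pref_succ l₁ X n
    have h₂ := cnt_pref_succ l₂ X n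
    simp only [combine, pref_dropLast, decide_eq_true_eq]
    unfold target
    split_ifs at * <;> omega

theorem measureCondition_combine {μ : Measure (ℕ → Bool)}
    (hμ : ∀ w : List Bool, μ (cylinder w) = (2 ^ w.length)⁻¹) {l₁ l₂ : List Bool → Bool}
    (h₁ : MeasureCondition μ l₁) (h₂ : MeasureCondition μ l₂) :
    MeasureCondition μ (combine l₁ l₂) := by
  intro n
  rcases Nat.eq_zero_or_pos n with rfl | hn
  · have h : μ (cylinder []) = 1 := by simpa using hμ []
    have hu : cylinder [] = Set.univ := by
      ext X
      simp [_root_.cylinder, pref]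
    rw [hu] at h
    simpa using (measure_mono (Set.subset_univ _)).trans h.le
  · have hsub : {Y | (n : ℕ∞) ≤ {m : ℕ | combine l₁ l₂ (pref Y m) = true}.encard} ⊆
        {Y | ((n + 1 : ℕ) : ℕ∞) ≤ {m : ℕ | l₁ (pref Y m) = true}.encard} ∪
        {Y | ((n + 1 : ℕ) : ℕ∞) ≤ {m : ℕ | l₂ (pref Y m) = true}.encard} := by
      intro Y hY
      simp only [Set.mem_union, Set.mem_ofPred_eq, le_encard_iff] at hY ⊢
      obtain ⟨k, hk⟩ := hY
      rw [cnt_combine] at hk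
      unfold target at hk
      have : n + 1 ≤ cnt l₁ (pref Y k) ∨ n + 1 ≤ cnt l₂ (pref Y k) := by omega
      exact this.imp (fun h => ⟨k, h⟩) (fun h => ⟨k, h⟩)
    calc _ ≤ _ := measure_mono hsub
      _ ≤ _ := measure_union_le _ _
      _ ≤ (2 ^ (n + 1))⁻¹ + (2 ^ (n + 1))⁻¹ := add_le_add (h₁ (n + 1)) (h₂ (n + 1))
      _ = (2 ^ n)⁻¹ := by
        rw [pow_succ, ENNReal.mul_inv (by simp) (by simp), ← mul_add, ENNReal.inv_two_add_inv_two,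
          mul_one]

/-- Losing at most one yes answer along `X` does not lower the limit superior of the averages. -/
theorem limsup_le_of_cnt_le {l l' : List Bool → Bool} {X : ℕ → Bool}
    (h : ∀ n, cnt l (pref X n) ≤ cnt l' (pref X n) + 1) :
    limsup (fun n => pathAvg l (pref X n)) atTop ≤
      limsup (fun n => pathAvg l' (pref X n)) atTop := by
  have hbdd : IsBoundedUnder (· ≤ ·) atTop (fun n => pathAvg l' (pref X n)) := by
    refine isBoundedUnder_of_eventually_le (a := 2) ?_
    filter_upwards [eventually_ge_atTop 1] with n hn
    have hn' : (1 : ℝ) ≤ n := by exact_mod_cast hn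
    have hc : (cnt l' (pref X n) : ℝ) ≤ n + 1 := by exact_mod_cast cnt_le l' X n
    rw [pathAvg_eq, div_le_iff₀ (by linarith)]
    linarith
  have hcob : IsCoboundedUnder (· ≤ ·) atTop (fun n => pathAvg l (pref X n)) := by
    refine IsBoundedUnder.isCoboundedUnder_le (isBoundedUnder_of_eventually_ge (a := 0) ?_)
    refine Eventually.of_forall fun n => ?_
    rw [pathAvg_eq]
    positivity
  refine le_of_forall_pos_le_add fun ε hε => ?_
  have hfreq := frequently_lt_of_lt_limsup hcob
    (show limsup (fun n => pathAvg l (pref X n)) atTop - ε / 2 < _ by linarith)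
  have hsmall : ∀ᶠ n : ℕ in atTop, 1 / (n : ℝ) < ε / 2 :=
    tendsto_one_div_atTop_nhds_zero_nat.eventually_lt_const (by linarith)
  have := le_limsup_of_frequently_le (a := limsup (fun n => pathAvg l (pref X n)) atTop - ε)
    ((hfreq.and_eventually hsmall).mono fun n hn => ?_) hbdd
  · linarith
  · obtain ⟨hn₁, hn₂⟩ := hn
    have hc : (cnt l (pref X n) : ℝ) ≤ cnt l' (pref X n) + 1 := by exact_mod_cast h n
    have hd := div_le_div_of_nonneg_right hc (Nat.cast_nonneg (α := ℝ) n)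
    rw [add_div] at hd
    rw [pathAvg_eq] at hn₁ ⊢
    linarith

/-- `s`-learnability is closed under finite unions. -/
theorem sLearns_union
    (μ : Measure (ℕ → Bool)) (hμ : ∀ w : List Bool, μ (cylinder w) = (2 ^ w.length)⁻¹)
    (s : ℝ) (hs : 0 ≤ s) (Γ₁ Γ₂ : Set (ℕ → Bool)) (l₁ l₂ : List Bool → Bool)
    (h₁ : ∀ X ∈ Γ₁, SLearns μ l₁ s X) (h₂ : ∀ X ∈ Γ₂, SLearns μ l₂ s X) :
    ∃ l₃ : List Bool → Bool, ∀ X ∈ Γ₁ ∪ Γ₂, SLearns μ l₃ s X := by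
  rcases Γ₁.eq_empty_or_nonempty with rfl | ⟨X₁, hX₁⟩
  · exact ⟨l₂, by simpa using h₂⟩
  rcases Γ₂.eq_empty_or_nonempty with rfl | ⟨X₂, hX₂⟩
  · exact ⟨l₁, by simpa using h₁⟩
  have hm := measureCondition_combine hμ (h₁ X₁ hX₁).1 (h₂ X₂ hX₂).1
  refine ⟨combine l₁ l₂, ?_⟩
  rintro X (hX | hX)
  · refine ⟨hm, (h₁ X hX).2.trans (limsup_le_of_cnt_le fun n => ?_)⟩
    rw [cnt_combine]
    unfold target
    omega
  · refine ⟨hm, (h₂ X hX).2.trans (limsup_le_of_cnt_le fun n => ?_)⟩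
    rw [cnt_combine]
    unfold target
    omega
end

section
/- Let l be a learning function satisfying the measure condition, and let s ∈ [0,1] and r, n ∈ ℕ. Then the number of binary strings w of length n such that #{i ∈ {0,…,n} : l(w↾i) = yes} ≥ r + (1−s)·n is at most 2^{s·n − r}. -/
/-! With `k = ⌈r + (1 - s) n⌉`, every sequence extending one of the counted strings has at least
`k` yes answers, so the cylinders of these strings all lie in a set of measure at most `2⁻ᵏ`.
These cylinders are pairwise disjoint of measure `2⁻ⁿ` each, hence there are at most
`2ⁿ⁻ᵏ ≤ 2^(s n - r)` of them. -/

open Filter MeasureTheory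

/-- The number of `i ∈ {0,…,|w|}` such that `l` says yes on `w↾i`. -/
def yesCount (l : List Bool → Bool) (w : List Bool) : ℕ :=
  ((Finset.range (w.length + 1)).filter fun i => l (w.take i) = true).card

lemma take_eq_pref {w : List Bool} {X : ℕ → Bool} (hX : X ∈ cylinder w) {i : ℕ}
    (hi : i ≤ w.length) : w.take i = pref X i := by
  have h : pref X w.length = w := hX
  rw [← h, pref, pref, ← List.map_take, List.take_range, min_eq_left hi]

lemma yesCount_le_encard (l : List Bool → Bool) {w : List Bool} {X : ℕ → Bool}
    (hX : X ∈ cylinder w) :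
    (yesCount l w : ℕ∞) ≤ {m : ℕ | l (pref X m) = true}.encard := by
  rw [yesCount, ← Set.encard_coe_eq_coe_finsetCard]
  apply Set.encard_le_encard
  intro i hi
  simp only [Finset.coe_filter, Finset.mem_range, Set.mem_ofPred_eq] at hi ⊢
  rw [← take_eq_pref hX (by omega)]
  exact hi.2

lemma measurableSet_cylinder (w : List Bool) : MeasurableSet (cylinder w) := by
  have h : cylinder w = ⋂ i : Fin w.length, {X : ℕ → Bool | X i = w[i]} := by
    ext X
    simp only [_root_.cylinder, pref, Set.mem_ofPred_eq, Set.mem_iInter]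
    constructor
    · intro h i
      have := List.getElem_of_eq h (i := i) (by simp)
      simpa using this
    · intro h
      apply List.ext_getElem (by simp)
      intro i h1 h2
      simpa using h ⟨i, h2⟩
  rw [h]
  exact MeasurableSet.iInter fun i => measurable_pi_apply (i : ℕ) (measurableSet_singleton _)

/-- If `l` satisfies the measure condition, `s ∈ [0,1]` and `r n : ℕ`,
then the number of strings `w` of length `n` with at least `r + (1-s)n` yes answers along
`w` is at most `2^(sn - r)`. -/
theorem card_strings_with_many_yes_le
    (μ : Measure (ℕ → Bool)) (hμ : ∀ w : List Bool, μ (cylinder w) = (2 ^ w.length)⁻¹)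
    (l : List Bool → Bool) (hl : MeasureCondition μ l)
    (s : ℝ) (hs : s ∈ Set.Icc (0 : ℝ) 1) (r n : ℕ) :
    (({w : List Bool | w.length = n ∧
        (r : ℝ) + (1 - s) * n ≤ (yesCount l w : ℝ)}).ncard : ℝ) ≤
      (2 : ℝ) ^ (s * n - r) := by
  set A := {w : List Bool | w.length = n ∧ (r : ℝ) + (1 - s) * n ≤ (yesCount l w : ℝ)} with hA
  have hfin : A.Finite := (List.finite_length_eq Bool n).subset fun w hw => hw.1
  set k := ⌈(r : ℝ) + (1 - s) * n⌉₊ with hk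
  have hdisj : Set.PairwiseDisjoint (hfin.toFinset : Set (List Bool)) cylinder := by
    intro v hv w hw hvw
    rw [Finset.mem_coe, Set.Finite.mem_toFinset] at hv hw
    refine Set.disjoint_left.2 fun X hXv hXw => hvw ?_
    have h1 : pref X v.length = v := hXv
    have h2 : pref X w.length = w := hXw
    rw [← h1, ← h2, hv.1, hw.1]
  have hsub : (⋃ w ∈ hfin.toFinset, cylinder w) ⊆
      {Y | (k : ℕ∞) ≤ {m : ℕ | l (pref Y m) = true}.encard} := by
    intro X hX
    simp only [Set.mem_iUnion, Set.Finite.mem_toFinset] at hX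
    obtain ⟨w, hw, hXw⟩ := hX
    have hkw : k ≤ yesCount l w := Nat.ceil_le.2 hw.2
    exact (Nat.cast_le.2 hkw).trans (yesCount_le_encard l hXw)
  have hmeas := (measure_mono hsub).trans (hl k)
  rw [measure_biUnion_finset hdisj fun w _ => measurableSet_cylinder w,
    Finset.sum_congr rfl (g := fun _ => ((2 : ENNReal) ^ n)⁻¹)
      (fun w hw => by rw [hμ, ((Set.Finite.mem_toFinset hfin).1 hw).1]),
    Finset.sum_const, nsmul_eq_mul, ← Set.ncard_eq_toFinset_card A hfin] at hmeas
  have hreal : (A.ncard : ℝ) * ((2 : ℝ) ^ n)⁻¹ ≤ ((2 : ℝ) ^ k)⁻¹ := by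
    have := ENNReal.toReal_mono (by simp) hmeas
    simpa using this
  have hle : (A.ncard : ℝ) ≤ (2 : ℝ) ^ ((n : ℝ) - k) := by
    rw [Real.rpow_sub two_pos, Real.rpow_natCast, Real.rpow_natCast, div_eq_mul_inv]
    rw [← div_eq_mul_inv, div_le_iff₀ (by positivity)] at hreal
    linarith
  refine hle.trans (Real.rpow_le_rpow_of_exponent_le one_le_two ?_)
  have : (r : ℝ) + (1 - s) * n ≤ k := Nat.le_ceil _
  linarith
end
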